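/- Let H ∈ (0, 1/2). There exists a positive constant C, depending only on H, such that for every T ≥ 1, ∫∫_{0<s<t<T} min(1, s^(2H−2)) · min(1, (t−s)^(H−1)) dt ds ≤ C · T^H. -/

import Mathlib

open MeasureTheory Real Set

/-!
The shear `(s, t) ↦ (s, t - s)` preserves Lebesgue measure and maps the simplex `0 < s < t < T`
into the strip `(0, ∞) × (0, T]`. The integrand becomes a product there, so the integral is at most
`(∫₀^∞ min 1 (s ^ a) ds) * (∫₀^T min 1 (u ^ b) du)`. The first factor is the finite constant
`1 + ∫₁^∞ s ^ a ds = a / (a + 1)` and the second is at most `∫₀^T u ^ b du = T ^ (b + 1) / (b + 1)`.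
-/

section Shear

variable {G : Type*} [MeasurableSpace G] [AddGroup G] [MeasurableAdd₂ G] [MeasurableNeg G]
  {μ ν : Measure G} [SFinite μ] [SFinite ν] [ν.IsAddRightInvariant]

lemma integrableOn_preimage_shear_iff {E : Type*} [NormedAddCommGroup E] {F : G × G → E}
    {S : Set (G × G)} :
    IntegrableOn (fun p ↦ F (p.1, p.2 - p.1)) ((fun p ↦ (p.1, p.2 - p.1)) ⁻¹' S) (μ.prod ν) ↔
      IntegrableOn F S (μ.prod ν) :=
  (measurePreserving_prod_sub μ ν).integrableOn_comp_preimage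
    (MeasurableEquiv.shearSubRight G).measurableEmbedding

lemma setIntegral_preimage_shear {E : Type*} [NormedAddCommGroup E] [NormedSpace ℝ E]
    (F : G × G → E) (S : Set (G × G)) :
    ∫ p in (fun p ↦ (p.1, p.2 - p.1)) ⁻¹' S, F (p.1, p.2 - p.1) ∂μ.prod ν =
      ∫ q in S, F q ∂μ.prod ν :=
  (measurePreserving_prod_sub μ ν).setIntegral_preimage_emb
    (MeasurableEquiv.shearSubRight G).measurableEmbedding F S

end Shear

lemma simplex_subset_preimage_shear (T : ℝ) :
    {p : ℝ × ℝ | 0 < p.1 ∧ p.1 < p.2 ∧ p.2 < T} ⊆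
      (fun p ↦ (p.1, p.2 - p.1)) ⁻¹' (Ioi 0 ×ˢ Ioc 0 T) :=
  fun _ ⟨hs, hst, htT⟩ ↦ ⟨hs, sub_pos.2 hst, by linarith⟩

lemma setIntegral_simplex_mul_sub_le {f g : ℝ → ℝ} {T : ℝ}
    (hf : IntegrableOn f (Ioi 0)) (hg : IntegrableOn g (Ioc 0 T))
    (hf_nonneg : ∀ s ∈ Ioi 0, 0 ≤ f s) (hg_nonneg : ∀ u ∈ Ioc 0 T, 0 ≤ g u) :
    ∫ p in {p : ℝ × ℝ | 0 < p.1 ∧ p.1 < p.2 ∧ p.2 < T}, f p.1 * g (p.2 - p.1) ≤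
      (∫ s in Ioi 0, f s) * ∫ u in Ioc 0 T, g u := by
  have h_int : IntegrableOn (fun q : ℝ × ℝ ↦ f q.1 * g q.2) (Ioi 0 ×ˢ Ioc 0 T) := by
    rw [IntegrableOn, Measure.volume_eq_prod, ← Measure.prod_restrict]
    exact hf.mul_prod hg
  have h_meas : MeasurableSet ((fun p : ℝ × ℝ ↦ (p.1, p.2 - p.1)) ⁻¹' (Ioi 0 ×ˢ Ioc 0 T)) :=
    (measurableSet_Ioi.prod measurableSet_Ioc).preimage (by fun_prop)
  calc
    _ ≤ ∫ p in (fun p : ℝ × ℝ ↦ (p.1, p.2 - p.1)) ⁻¹' (Ioi 0 ×ˢ Ioc 0 T),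
          f p.1 * g (p.2 - p.1) := by
      refine setIntegral_mono_set (integrableOn_preimage_shear_iff.2 h_int) ?_
        (simplex_subset_preimage_shear T).eventuallyLE
      filter_upwards [ae_restrict_mem h_meas] with p hp
      exact mul_nonneg (hf_nonneg _ hp.1) (hg_nonneg _ hp.2)
    _ = ∫ q in Ioi (0 : ℝ) ×ˢ Ioc 0 T, f q.1 * g q.2 :=
      setIntegral_preimage_shear (fun q ↦ f q.1 * g q.2) _
    _ = _ := setIntegral_prod_mul f g _ _

section TruncatedPower

variable {a b c T s : ℝ}

lemma min_one_rpow_nonneg (hs : 0 ≤ s) : 0 ≤ min 1 (s ^ a) :=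
  le_min zero_le_one (rpow_nonneg hs a)

lemma integrableOn_Ioc_min_one_rpow : IntegrableOn (fun s : ℝ ↦ min 1 (s ^ a)) (Ioc 0 c) := by
  refine Measure.integrableOn_of_bounded (M := 1) measure_Ioc_lt_top.ne
    (by fun_prop : Measurable _).aestronglyMeasurable ?_
  filter_upwards [ae_restrict_mem measurableSet_Ioc] with s hs
  rw [norm_of_nonneg (min_one_rpow_nonneg hs.1.le)]
  exact min_le_left _ _

lemma eqOn_Ioc_min_one_rpow (ha : a ≤ 0) : EqOn (fun s : ℝ ↦ min 1 (s ^ a)) 1 (Ioc 0 1) :=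
  fun _ hs ↦ min_eq_left (one_le_rpow_of_pos_of_le_one_of_nonpos hs.1 hs.2 ha)

lemma eqOn_Ioi_min_one_rpow (ha : a ≤ 0) : EqOn (fun s : ℝ ↦ min 1 (s ^ a)) (· ^ a) (Ioi 1) :=
  fun _ hs ↦ min_eq_right (rpow_le_one_of_one_le_of_nonpos (le_of_lt hs) ha)

lemma integrableOn_Ioi_one_min_one_rpow (ha : a < -1) :
    IntegrableOn (fun s : ℝ ↦ min 1 (s ^ a)) (Ioi 1) :=
  (integrableOn_Ioi_rpow_of_lt ha one_pos).congr_fun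
    (eqOn_Ioi_min_one_rpow (by linarith)).symm measurableSet_Ioi

lemma integrableOn_Ioi_min_one_rpow (ha : a < -1) :
    IntegrableOn (fun s : ℝ ↦ min 1 (s ^ a)) (Ioi 0) := by
  rw [← Ioc_union_Ioi_eq_Ioi zero_le_one]
  exact integrableOn_Ioc_min_one_rpow.union (integrableOn_Ioi_one_min_one_rpow ha)

lemma integral_Ioi_min_one_rpow (ha : a < -1) :
    ∫ s in Ioi (0 : ℝ), min 1 (s ^ a) = a / (a + 1) := by
  have ha_nonpos : a ≤ 0 := by linarith
  have ha_ne : a + 1 ≠ 0 := by linarith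
  calc
    _ = (∫ s in Ioc (0 : ℝ) 1, min 1 (s ^ a)) + ∫ s in Ioi (1 : ℝ), min 1 (s ^ a) := by
      rw [← Ioc_union_Ioi_eq_Ioi zero_le_one, setIntegral_union (Ioc_disjoint_Ioi le_rfl)
        measurableSet_Ioi integrableOn_Ioc_min_one_rpow (integrableOn_Ioi_one_min_one_rpow ha)]
    _ = (∫ _ in Ioc (0 : ℝ) 1, 1) + ∫ s in Ioi (1 : ℝ), s ^ a :=
      congrArg₂ _ (setIntegral_congr_fun measurableSet_Ioc (eqOn_Ioc_min_one_rpow ha_nonpos))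
        (setIntegral_congr_fun measurableSet_Ioi (eqOn_Ioi_min_one_rpow ha_nonpos))
    _ = 1 + -1 / (a + 1) := by
      rw [integral_Ioi_rpow_of_lt ha one_pos, one_rpow]
      simp
    _ = a / (a + 1) := by
      field_simp
      ring

lemma integral_Ioc_min_one_rpow_le (hb : -1 < b) (hT : 0 ≤ T) :
    ∫ u in Ioc 0 T, min 1 (u ^ b) ≤ T ^ (b + 1) / (b + 1) := by
  have h_int : IntegrableOn (fun u : ℝ ↦ u ^ b) (Ioc 0 T) :=
    (intervalIntegral.intervalIntegrable_rpow' hb).1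
  calc
    _ ≤ ∫ u in Ioc 0 T, u ^ b :=
      setIntegral_mono integrableOn_Ioc_min_one_rpow h_int fun _ ↦ min_le_right _ _
    _ = T ^ (b + 1) / (b + 1) := by
      rw [← intervalIntegral.integral_of_le hT, integral_rpow (.inl hb),
        zero_rpow (by linarith), sub_zero]

end TruncatedPower

theorem second_cumulant_simplex_bound_general {a b T : ℝ} (ha : a < -1) (hb : -1 < b)
    (hT : 0 ≤ T) :
    ∫ p in {p : ℝ × ℝ | 0 < p.1 ∧ p.1 < p.2 ∧ p.2 < T},
        min 1 (p.1 ^ a) * min 1 ((p.2 - p.1) ^ b) ≤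
      a / ((a + 1) * (b + 1)) * T ^ (b + 1) :=
  calc
    _ ≤ (∫ s in Ioi (0 : ℝ), min 1 (s ^ a)) * ∫ u in Ioc 0 T, min 1 (u ^ b) :=
      setIntegral_simplex_mul_sub_le (integrableOn_Ioi_min_one_rpow ha)
        integrableOn_Ioc_min_one_rpow (fun _ hs ↦ min_one_rpow_nonneg (le_of_lt hs))
        fun _ hu ↦ min_one_rpow_nonneg hu.1.le
    _ ≤ a / (a + 1) * (T ^ (b + 1) / (b + 1)) := by
      rw [integral_Ioi_min_one_rpow ha]
      exact mul_le_mul_of_nonneg_left (integral_Ioc_min_one_rpow_le hb hT)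
        (div_nonneg_of_nonpos (by linarith) (by linarith))
    _ = a / ((a + 1) * (b + 1)) * T ^ (b + 1) := by
      rw [div_mul_div_comm, mul_div_right_comm]

/-- For `H ∈ (0,1/2)` there is `C > 0` (depending only on `H`) such that for all `T ≥ 1`,
`∫∫_{0<s<t<T} min(1,s^{2H-2}) ⬝ min(1,(t-s)^{H-1}) dt ds ≤ C ⬝ T^H`. -/
theorem second_cumulant_simplex_bound (H : ℝ) (hH : H ∈ Set.Ioo (0 : ℝ) (1/2)) :
    ∃ C : ℝ, 0 < C ∧ ∀ T : ℝ, 1 ≤ T →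
      (∫ p in {p : ℝ × ℝ | 0 < p.1 ∧ p.1 < p.2 ∧ p.2 < T},
        min 1 (p.1 ^ (2 * H - 2)) * min 1 ((p.2 - p.1) ^ (H - 1))) ≤ C * T ^ H := by
  obtain ⟨hH_pos, hH_lt⟩ := hH
  refine ⟨(2 * H - 2) / ((2 * H - 2 + 1) * H),
    div_pos_of_neg_of_neg (by linarith) (mul_neg_of_neg_of_pos (by linarith) hH_pos),
    fun T hT ↦ ?_⟩
  simpa only [sub_add_cancel] using second_cumulant_simplex_bound_general (a := 2 * H - 2)
    (b := H - 1) (by linarith) (by linarith) (zero_le_one.trans hT)
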